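/- Let d ≥ 1 and ε > 0, and let ν : ℤ^d → [0,∞) be a bounded function satisfying the balance equation with parameter ε and with ν_0 > 0. Then for every x ∈ ℤ^d with x ≠ 0, ν_x = ν_0 · E_x[ 1{τ_0 < ∞} · (1 + ε ν_0)^{−τ_0} ], where τ_0 is the first hitting time of 0 by the simple random walk started at x. -/

import Mathlib

open Finset

namespace CBRW

/-- The `i`-th canonical basis vector of `ℤ^d`. -/
def e (d : ℕ) (i : Fin d) : Fin d → ℤ := Pi.single i 1

/-- The step of the simple random walk corresponding to the direction `(i, b)`:
`+e_i` if `b = true`, `-e_i` if `b = false`. -/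
def dir (d : ℕ) (s : Fin d × Bool) : Fin d → ℤ := if s.2 then e d s.1 else -(e d s.1)

/-- The position at time `j` of the simple random walk started at `x` and driven by the
word of increments `w` (of length `k`); only the first `j` letters of `w` are used. -/
def posAt (d : ℕ) {k : ℕ} (x : Fin d → ℤ) (w : Fin k → Fin d × Bool) (j : ℕ) :
    Fin d → ℤ :=
  x + ∑ i : Fin k, if (i : ℕ) < j then dir d (w i) else 0

open Classical in
/-- `ℙ_x(τ_y = k)`: the probability that the simple random walk on `ℤ^d` started at `x`
first visits `y` at time `k` (meaningful for `k ≥ 1`). -/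
noncomputable def firstHitProb (d : ℕ) (x y : Fin d → ℤ) (k : ℕ) : ℝ :=
  ((Finset.univ.filter (fun w : Fin k → Fin d × Bool =>
      (∀ j, 1 ≤ j → j < k → posAt d x w j ≠ y) ∧ posAt d x w k = y)).card : ℝ) /
    (2 * (d : ℝ)) ^ k

open Classical in
/-- `ℙ_x(τ_y ≥ k + 1)`: the probability that the simple random walk on `ℤ^d` started at `x`
avoids `y` at all times `1, …, k`. -/
noncomputable def avoidProb (d : ℕ) (x y : Fin d → ℤ) (k : ℕ) : ℝ :=
  ((Finset.univ.filter (fun w : Fin k → Fin d × Bool =>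
      ∀ j, 1 ≤ j → j ≤ k → posAt d x w j ≠ y)).card : ℝ) / (2 * (d : ℝ)) ^ k

/-- `γ_d = ℙ_0(τ_0 = ∞)`: the probability that the simple random walk started at `0`
never returns to `0`. -/
noncomputable def gamma (d : ℕ) : ℝ := 1 - ∑' k : ℕ, firstHitProb d 0 0 (k + 1)

/-- `E_x[𝟙_{τ_y < ∞} (1 + u)^{-τ_y}]` for the simple random walk started at `x`. -/
noncomputable def hitGen (d : ℕ) (x y : Fin d → ℤ) (u : ℝ) : ℝ :=
  ∑' k : ℕ, firstHitProb d x y (k + 1) * ((1 + u) ^ (k + 1))⁻¹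

/-- `ν` satisfies the balance equation with parameter `ε`:
`(1 + ε ν 0) ν x = (1/(2d)) ∑ i (ν (x + e i) + ν (x - e i))` for all `x ≠ 0`. -/
def BalanceEq (d : ℕ) (ε : ℝ) (ν : (Fin d → ℤ) → ℝ) : Prop :=
  ∀ x : Fin d → ℤ, x ≠ 0 →
    (1 + ε * ν 0) * ν x =
      (1 / (2 * (d : ℝ))) * ∑ i : Fin d, (ν (x + e d i) + ν (x - e d i))

/-- `ν` is a probability measure on `ℤ^d`, identified with a nonnegative function
summing to `1`. -/
def IsProbMeasure (d : ℕ) (ν : (Fin d → ℤ) → ℝ) : Prop :=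
  (∀ x, 0 ≤ ν x) ∧ HasSum ν 1

end CBRW

namespace CBRW

lemma posAt_zero (d : ℕ) {k : ℕ} (x : Fin d → ℤ) (w : Fin k → Fin d × Bool) :
    posAt d x w 0 = x := by
  simp [posAt]

lemma posAt_cons (d : ℕ) {k : ℕ} (x : Fin d → ℤ) (s : Fin d × Bool)
    (w : Fin k → Fin d × Bool) (j : ℕ) :
    posAt d x (Fin.cons s w : Fin (k + 1) → Fin d × Bool) (j + 1)
      = posAt d (x + dir d s) w j := by
  simp [posAt, Fin.sum_univ_succ, add_assoc]

lemma card_filter_cons {α : Type*} [Fintype α] (k : ℕ) (P : (Fin (k + 1) → α) → Prop)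
    [DecidablePred P] :
    (Finset.univ.filter P).card
      = ∑ s : α, (Finset.univ.filter (fun w : Fin k → α => P (Fin.cons s w))).card := by
  simp only [Finset.card_filter]
  rw [← (Fin.consEquiv (fun _ : Fin (k + 1) => α)).sum_comp, Fintype.sum_prod_type]
  rfl

lemma firstHit_one (d : ℕ) (x : Fin d → ℤ) :
    firstHitProb d x 0 1
      = (1 / (2 * (d : ℝ))) * ∑ s : Fin d × Bool, if x + dir d s = 0 then 1 else 0 := by
  classical
  unfold firstHitProb
  rw [card_filter_cons, div_eq_mul_inv, mul_comm, pow_one, one_div]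
  push_cast
  congr 1
  refine Finset.sum_congr rfl fun s _ => ?_
  have h : ∀ w : Fin 0 → Fin d × Bool,
      ((∀ j, 1 ≤ j → j < 0 + 1 →
        posAt d x (Fin.cons s w : Fin (0 + 1) → Fin d × Bool) j ≠ 0) ∧
        posAt d x (Fin.cons s w : Fin (0 + 1) → Fin d × Bool) (0 + 1) = 0)
      ↔ x + dir d s = 0 := by
    intro w
    rw [posAt_cons, posAt_zero]
    constructor
    · exact fun h => h.2
    · exact fun h => ⟨fun j h1 h2 => by omega, h⟩
  simp only [zero_add] at h
  simp only [h]
  split_ifs with h0 <;> simp [h0]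

lemma firstHit_succ (d : ℕ) (x : Fin d → ℤ) (k : ℕ) :
    firstHitProb d x 0 (k + 1 + 1)
      = (1 / (2 * (d : ℝ))) * ∑ s : Fin d × Bool,
        if x + dir d s = 0 then 0 else firstHitProb d (x + dir d s) 0 (k + 1) := by
  classical
  unfold firstHitProb
  rw [card_filter_cons, pow_succ _ (k + 1), Finset.mul_sum]
  push_cast
  rw [Finset.sum_div]
  refine Finset.sum_congr rfl fun s _ => ?_
  have h : ∀ w : Fin (k + 1) → Fin d × Bool,
      ((∀ j, 1 ≤ j → j < k + 1 + 1 →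
        posAt d x (Fin.cons s w : Fin (k + 1 + 1) → Fin d × Bool) j ≠ 0) ∧
        posAt d x (Fin.cons s w : Fin (k + 1 + 1) → Fin d × Bool) (k + 1 + 1) = 0)
      ↔ x + dir d s ≠ 0 ∧ ((∀ j, 1 ≤ j → j < k + 1 → posAt d (x + dir d s) w j ≠ 0) ∧
        posAt d (x + dir d s) w (k + 1) = 0) := by
    intro w
    rw [posAt_cons]
    constructor
    · rintro ⟨h1, h2⟩
      refine ⟨?_, ?_, h2⟩
      · have := h1 (0 + 1) le_rfl (by omega)
        rwa [posAt_cons, posAt_zero] at this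
      · intro j _ hj
        have := h1 (j + 1) (by omega) (by omega)
        rwa [posAt_cons] at this
    · rintro ⟨h0, h1, h2⟩
      refine ⟨?_, h2⟩
      intro j hj hj'
      obtain ⟨i, rfl⟩ : ∃ i, j = i + 1 := ⟨j - 1, by omega⟩
      rw [posAt_cons]
      rcases Nat.eq_zero_or_pos i with rfl | hi
      · rwa [posAt_zero]
      · exact h1 i hi (by omega)
  simp only [h]
  split_ifs with h0
  · simp [h0]
  · simp only [ne_eq, h0, not_false_eq_true, true_and]
    rw [div_mul_eq_div_div, div_eq_mul_inv _ (2 * (d : ℝ)), mul_comm, one_div]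

lemma balance_dir (d : ℕ) (ν : (Fin d → ℤ) → ℝ) (x : Fin d → ℤ) :
    ∑ i : Fin d, (ν (x + e d i) + ν (x - e d i)) = ∑ s : Fin d × Bool, ν (x + dir d s) := by
  rw [Fintype.sum_prod_type]
  simp [dir, sub_eq_add_neg]

/-- Partial sums of the discounted hitting series. -/
noncomputable def part (d : ℕ) (a : ℝ) (n : ℕ) (x : Fin d → ℤ) : ℝ :=
  ∑ k ∈ Finset.range n, firstHitProb d x 0 (k + 1) * (a ^ (k + 1))⁻¹

lemma part_succ (d : ℕ) (a : ℝ) (n : ℕ) (x : Fin d → ℤ) :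
    part d a (n + 1) x = a⁻¹ * ((1 / (2 * (d : ℝ))) * ∑ s : Fin d × Bool,
      if x + dir d s = 0 then 1 else part d a n (x + dir d s)) := by
  have key : ∀ k, firstHitProb d x 0 (k + 1 + 1) * (a ^ (k + 1 + 1))⁻¹
      = a⁻¹ * ((1 / (2 * (d : ℝ))) * ∑ s : Fin d × Bool, if x + dir d s = 0 then 0 else
        firstHitProb d (x + dir d s) 0 (k + 1) * (a ^ (k + 1))⁻¹) := by
    intro k
    rw [firstHit_succ, pow_succ a (k + 1), mul_inv]
    have : ∀ s : Fin d × Bool, (if x + dir d s = 0 then (0 : ℝ) else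
        firstHitProb d (x + dir d s) 0 (k + 1) * (a ^ (k + 1))⁻¹)
        = (if x + dir d s = 0 then (0 : ℝ) else
        firstHitProb d (x + dir d s) 0 (k + 1)) * (a ^ (k + 1))⁻¹ := by
      intro s; split_ifs <;> simp
    simp only [this]
    rw [← Finset.sum_mul]
    ring
  rw [part, Finset.sum_range_succ']
  simp only [key]
  rw [zero_add, firstHit_one, ← Finset.mul_sum, ← Finset.mul_sum, Finset.sum_comm, pow_one,
    mul_comm _ a⁻¹, ← mul_add, ← mul_add, ← Finset.sum_add_distrib]
  congr 2
  refine Finset.sum_congr rfl fun s _ => ?_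
  split_ifs <;> simp [part]

end CBRW

open CBRW in
/-- If `ν` is bounded, nonnegative, satisfies the balance equation with parameter `ε > 0`
and `ν 0 > 0`, then for all `x ≠ 0`,
`ν x = ν 0 · E_x[𝟙_{τ_0 < ∞} (1 + ε ν 0)^{-τ_0}]`. -/
theorem nu_eq_expected_discounted_hitting
    (d : ℕ) (hd : 1 ≤ d) (ε : ℝ) (hε : 0 < ε)
    (ν : (Fin d → ℤ) → ℝ) (hν0 : ∀ x, 0 ≤ ν x) (hbdd : ∃ B, ∀ x, ν x ≤ B)
    (hbal : BalanceEq d ε ν) (hpos : 0 < ν 0) :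
    ∀ x : Fin d → ℤ, x ≠ 0 → ν x = ν 0 * hitGen d x 0 (ε * ν 0) := by
  obtain ⟨B, hB⟩ := hbdd
  set a : ℝ := 1 + ε * ν 0 with ha
  have ha1 : 1 < a := by have := mul_pos hε hpos; linarith
  have ha0 : 0 < a := by linarith
  have hd0 : (0 : ℝ) < d := by exact_mod_cast hd
  have hB0 : 0 ≤ B := (hν0 0).trans (hB 0)
  have main : ∀ n : ℕ, ∀ x : Fin d → ℤ, x ≠ 0 →
      |ν x - ν 0 * part d a n x| ≤ B * a⁻¹ ^ n := by
    intro n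
    induction n with
    | zero =>
      intro x _
      simp only [part, Finset.range_zero, Finset.sum_empty, mul_zero, sub_zero, pow_zero, mul_one]
      rw [abs_of_nonneg (hν0 x)]
      exact hB x
    | succ n ih =>
      intro x hx
      have h1 := hbal x hx
      rw [balance_dir, ← ha] at h1
      have h2 : ν x = a⁻¹ * ((1 / (2 * (d : ℝ))) * ∑ s : Fin d × Bool, ν (x + dir d s)) := by
        rw [← h1, inv_mul_cancel_left₀ ha0.ne']
      have h3 : ν x - ν 0 * part d a (n + 1) x = a⁻¹ * ((1 / (2 * (d : ℝ))) *
          ∑ s : Fin d × Bool, (ν (x + dir d s) -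
            ν 0 * if x + dir d s = 0 then 1 else part d a n (x + dir d s))) := by
        rw [Finset.sum_sub_distrib, ← Finset.mul_sum, part_succ, h2]
        ring
      rw [h3, abs_mul, abs_mul, abs_of_pos (inv_pos.2 ha0),
        abs_of_pos (by positivity : 0 < 1 / (2 * (d : ℝ)))]
      have h4 : |∑ s : Fin d × Bool, (ν (x + dir d s) -
            ν 0 * if x + dir d s = 0 then 1 else part d a n (x + dir d s))|
          ≤ 2 * d * (B * a⁻¹ ^ n) := by
        refine (Finset.abs_sum_le_sum_abs _ _).trans ?_
        refine (Finset.sum_le_card_nsmul _ _ (B * a⁻¹ ^ n) ?_).trans ?_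
        · intro s _
          split_ifs with h0
          · rw [h0, mul_one, sub_self, abs_zero]
            positivity
          · exact ih _ h0
        · simp [mul_comm]
      calc _ ≤ a⁻¹ * (1 / (2 * (d : ℝ)) * (2 * d * (B * a⁻¹ ^ n))) := by gcongr
        _ = B * a⁻¹ ^ (n + 1) := by
          rw [pow_succ]
          field_simp
  intro x hx
  have hnn : ∀ k, 0 ≤ firstHitProb d x 0 (k + 1) * (a ^ (k + 1))⁻¹ := by
    intro k
    unfold firstHitProb
    positivity
  have hlim0 : Filter.Tendsto (fun n : ℕ => B * a⁻¹ ^ n) Filter.atTop (nhds 0) := by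
    have := (tendsto_pow_atTop_nhds_zero_of_lt_one (inv_nonneg.2 ha0.le)
      (inv_lt_one_of_one_lt₀ ha1)).const_mul B
    simpa using this
  have hlim1 : Filter.Tendsto (fun n : ℕ => ν x - ν 0 * part d a n x) Filter.atTop (nhds 0) :=
    squeeze_zero_norm (fun n => main n x hx) hlim0
  have hlim : Filter.Tendsto (fun n : ℕ => part d a n x) Filter.atTop (nhds (ν x / ν 0)) := by
    have := (hlim1.const_sub (ν x)).div_const (ν 0)
    simpa [mul_div_cancel_left₀ _ hpos.ne'] using this
  have hs := (hasSum_iff_tendsto_nat_of_nonneg hnn (ν x / ν 0)).2 hlim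
  have : hitGen d x 0 (ε * ν 0) = ν x / ν 0 := hs.tsum_eq
  rw [this, mul_div_cancel₀ _ hpos.ne']
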